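/- arXiv:2009.11682 — 2 statements merged into one kernel-verified Lean document; each statement's English description precedes it below -/
import Mathlib

section
/- Any non-isotropic subsystem of a trigonometric ∨-system is again a trigonometric ∨-system. Precisely: let (𝒜,c) be a trigonometric ∨-system in V = ℂ^N, W ⊆ V* a linear subspace, and B = 𝒜 ∩ W a non-isotropic subsystem with span(B) = W. Then for every α ∈ B and every α-series Γ of B (the equivalence classes of B∖δ_α^B under γ₁ ∼ γ₂ iff γ₁±γ₂ ∈ ℤα, where δ_α^B = {γ ∈ B : γ proportional to α}), one has Σ_{β∈Γ} c_β α(β^{∨_B})·(α∧β) = 0, where β^{∨_B} ∈ W^∨ is the unique vector with G_B(β^{∨_B}, u) = β(u) for all u ∈ W^∨. -/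
open scoped Classical
open Finset

noncomputable section

/-- Evaluation of a covector `α` on a vector `x` in `ℂ^N`. -/
def ev {N : ℕ} (α x : Fin N → ℂ) : ℂ := ∑ i, α i * x i

/-- The bilinear form `G_𝒜` associated to a configuration. -/
def Gform {N : ℕ} (A : Finset (Fin N → ℂ)) (c : (Fin N → ℂ) → ℂ)
    (u v : Fin N → ℂ) : ℂ :=
  ∑ α ∈ A, c α * ev α u * ev α v

/-- `(α ∧ β)(a, b) = α(a)β(b) - α(b)β(a)`. -/
def wedge {N : ℕ} (α β a b : Fin N → ℂ) : ℂ :=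
  ev α a * ev β b - ev α b * ev β a

/-- Non-degeneracy of `G_𝒜`. -/
def Nondeg {N : ℕ} (A : Finset (Fin N → ℂ)) (c : (Fin N → ℂ) → ℂ) : Prop :=
  ∀ u : Fin N → ℂ, (∀ v : Fin N → ℂ, Gform A c u v = 0) → u = 0

/-- `dual` assigns to each covector `γ ∈ 𝒜` its `G_𝒜`-dual vector `γ^∨`. -/
def IsDual {N : ℕ} (A : Finset (Fin N → ℂ)) (c : (Fin N → ℂ) → ℂ)
    (dual : (Fin N → ℂ) → Fin N → ℂ) : Prop :=
  ∀ γ ∈ A, ∀ v : Fin N → ℂ, Gform A c (dual γ) v = ev γ v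

/-- `γ` is proportional to `α`. -/
def Collin {N : ℕ} (α γ : Fin N → ℂ) : Prop := ∃ t : ℂ, γ = t • α

/-- `γ₁ ∼ γ₂` iff `γ₁ + γ₂` or `γ₁ - γ₂` is an integer multiple of `α`. -/
def SeriesRel {N : ℕ} (α γ₁ γ₂ : Fin N → ℂ) : Prop :=
  ∃ m : ℤ, γ₁ + γ₂ = (m : ℂ) • α ∨ γ₁ - γ₂ = (m : ℂ) • α

/-- `Γ` is an (maximal) `α`-series of the configuration `A`. -/
def IsSeries {N : ℕ} (A : Finset (Fin N → ℂ)) (α : Fin N → ℂ)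
    (Γ : Finset (Fin N → ℂ)) : Prop :=
  Γ.Nonempty ∧ (∀ γ ∈ Γ, γ ∈ A ∧ ¬ Collin α γ) ∧
    (∀ γ₁ ∈ Γ, ∀ γ₂ ∈ Γ, SeriesRel α γ₁ γ₂) ∧
    (∀ β ∈ A, ¬ Collin α β → (∃ γ ∈ Γ, SeriesRel α β γ) → β ∈ Γ)

/-- The trigonometric ∨-conditions. -/
def IsTrigVSystem {N : ℕ} (A : Finset (Fin N → ℂ)) (c : (Fin N → ℂ) → ℂ)
    (dual : (Fin N → ℂ) → Fin N → ℂ) : Prop :=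
  ∀ α ∈ A, ∀ Γ : Finset (Fin N → ℂ), IsSeries A α Γ →
    ∀ a b : Fin N → ℂ, ∑ β ∈ Γ, c β * ev α (dual β) * wedge α β a b = 0

/-- The form `G^{(1)}_𝒜` evaluated at `(u, v)`. -/
def G1form {N : ℕ} (A : Finset (Fin N → ℂ)) (c : (Fin N → ℂ) → ℂ)
    (u v : Fin N → ℂ) : ℂ :=
  ∑ α ∈ A, ∑ β ∈ A, c α * c β * wedge α β u v ^ 2

/-- The form `G^{(2)}_𝒜` evaluated at `(u, v)`. -/
def G2form {N : ℕ} (A : Finset (Fin N → ℂ)) (c : (Fin N → ℂ) → ℂ)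
    (dual : (Fin N → ℂ) → Fin N → ℂ) (u v : Fin N → ℂ) : ℂ :=
  ∑ α ∈ A, ∑ β ∈ A,
    c α * c β * Gform A c (dual α) (dual β) * wedge α β u v ^ 2

/-- Complex cotangent. -/
def ccot (z : ℂ) : ℂ := Complex.cos z / Complex.sin z

/-- The matrix `F_i(x)` of third derivatives of the prepotential, `1 ≤ i ≤ N`. -/
def Fmat {N : ℕ} (A : Finset (Fin N → ℂ)) (c : (Fin N → ℂ) → ℂ) (lam : ℂ)
    (i : Fin N) (x : Fin N → ℂ) : Matrix (Fin N ⊕ Unit) (Fin N ⊕ Unit) ℂ :=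
  Matrix.of fun p q =>
    match p, q with
    | Sum.inl p, Sum.inl q => lam * ∑ α ∈ A, c α * α i * α p * α q * ccot (ev α x)
    | Sum.inl p, Sum.inr _ => 2 * ∑ α ∈ A, c α * α i * α p
    | Sum.inr _, Sum.inl q => 2 * ∑ α ∈ A, c α * α i * α q
    | Sum.inr _, Sum.inr _ => 0

/-- The constant matrix `F_{N+1}`. -/
def Flast {N : ℕ} (A : Finset (Fin N → ℂ)) (c : (Fin N → ℂ) → ℂ) :
    Matrix (Fin N ⊕ Unit) (Fin N ⊕ Unit) ℂ :=
  Matrix.of fun p q =>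
    match p, q with
    | Sum.inl p, Sum.inl q => 2 * ∑ α ∈ A, c α * α p * α q
    | Sum.inr _, Sum.inr _ => 2
    | _, _ => 0

/-- `(𝒜, c, λ)` satisfies the trigonometric WDVV equations. -/
def SatisfiesWDVV {N : ℕ} (A : Finset (Fin N → ℂ)) (c : (Fin N → ℂ) → ℂ)
    (lam : ℂ) : Prop :=
  IsUnit (Flast A c) ∧
    ∀ x : Fin N → ℂ, (∀ α ∈ A, Complex.sin (ev α x) ≠ 0) →
      ∀ i j : Fin N,
        Fmat A c lam i x * (Flast A c)⁻¹ * Fmat A c lam j x =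
          Fmat A c lam j x * (Flast A c)⁻¹ * Fmat A c lam i x

/-- The covectors of `𝒜` lie in a lattice of full rank `N` in `(ℂ^N)^*`. -/
def InLattice {N : ℕ} (A : Finset (Fin N → ℂ)) : Prop :=
  ∃ L : Fin N → Fin N → ℂ, LinearIndependent ℂ L ∧
    ∀ α ∈ A, ∃ m : Fin N → ℤ, α = ∑ i, (m i : ℂ) • L i

/-- No two covectors of `𝒜` are negatively proportional. -/
def PositiveSystem {N : ℕ} (A : Finset (Fin N → ℂ)) : Prop :=
  ∀ α ∈ A, ∀ t : ℝ, t < 0 → (t : ℂ) • α ∉ A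

/-- The operator `M(v) = Σ_{β ∈ B} c_β β(v) β^∨`. -/
def Mop {N : ℕ} (B : Finset (Fin N → ℂ)) (c : (Fin N → ℂ) → ℂ)
    (dual : (Fin N → ℂ) → Fin N → ℂ) (v : Fin N → ℂ) : Fin N → ℂ :=
  ∑ β ∈ B, (c β * ev β v) • dual β

/-- `W^∨ = span{β^∨ : β ∈ B}`. -/
def Wdual {N : ℕ} (B : Finset (Fin N → ℂ))
    (dual : (Fin N → ℂ) → Fin N → ℂ) : Submodule ℂ (Fin N → ℂ) :=
  Submodule.span ℂ (dual '' (B : Set (Fin N → ℂ)))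

/-- `B` is non-isotropic: the restriction of `G_B` to `W^∨` is non-degenerate. -/
def NonIsotropic {N : ℕ} (B : Finset (Fin N → ℂ)) (c : (Fin N → ℂ) → ℂ)
    (dual : (Fin N → ℂ) → Fin N → ℂ) : Prop :=
  ∀ u ∈ Wdual B dual, (∀ v ∈ Wdual B dual, Gform B c u v = 0) → u = 0

/-!
The `∨`-conditions at `α ∈ B` survive the passage from `𝒜` to `B` as long as the dual vectors are
those of `𝒜`, because a subspace contains each `α`-series it meets. Summed over all series they
say `α ∧ G_B(α^∨, ·) = 0`, so that `G_B(α^∨, ·) = l α` for a scalar `l`. Non-degeneracy of `G_B`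
on `W^∨` turns this into `α^∨ = l α^{∨_B}`, hence `α(β^∨) = l α(β^{∨_B})` for all `β ∈ B`. Here
`l ≠ 0`, as `α^∨ ≠ 0`, and the `∨`-conditions for the two kinds of dual vectors are proportional.
-/

section VSystem

variable {ι K V : Type*} [Field K] [AddCommGroup V] [Module K V]
  {f : ι → Module.Dual K V} {c : ι → K} {r : ι → Setoid ι} {s t : Finset ι} {d d' : ι → V}
  {U : Submodule K V}

/-- The form `G(u, v) = ∑ c_i f_i(u) f_i(v)` of a configuration over a field, in which the
covectors `f_i` and their multiplicities `c_i` are indexed by a finite set `s`. -/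
def covectorForm (f : ι → Module.Dual K V) (c : ι → K) (s : Finset ι) : LinearMap.BilinForm K V :=
  ∑ i ∈ s, c i • LinearMap.BilinForm.linMulLin (f i) (f i)

/-- The `∨`-conditions on the covectors `f_i`, `i ∈ s`, with dual vectors `d_i`, where `r i` is the
relation whose classes play the role of the `α`-series for `α = f_i`. Taking `r i j k` to mean that
`f_j` and `f_k` span the same subspace together with `f_i` gives the rational `∨`-conditions. -/
def IsVSystem (f : ι → Module.Dual K V) (c : ι → K) (r : ι → Setoid ι) (s : Finset ι)
    (d : ι → V) : Prop :=
  ∀ i ∈ s, ∀ j ∈ s, ∀ a b : V,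
    ∑ k ∈ s with r i k j, c k * f i (d k) * (f i a * f k b - f i b * f k a) = 0

theorem covectorForm_apply (u v : V) : covectorForm f c s u v = ∑ i ∈ s, c i * f i u * f i v := by
  simp [covectorForm, mul_assoc]

theorem covectorForm_comm (u v : V) : covectorForm f c s u v = covectorForm f c s v u := by
  simp only [covectorForm_apply, mul_right_comm]

theorem apply_dual_comm (hU : ∀ i ∈ t, d i ∈ U)
    (hd : ∀ i ∈ t, ∀ u ∈ U, covectorForm f c s (d i) u = f i u) {i j : ι} (hi : i ∈ t)
    (hj : j ∈ t) : f i (d j) = f j (d i) := by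
  rw [← hd i hi _ (hU j hj), covectorForm_comm, hd j hj _ (hU i hi)]

theorem exists_eq_smul_of_mul_comm {φ ψ : Module.Dual K V} (hφ : φ ≠ 0)
    (h : ∀ a b, φ a * ψ b = φ b * ψ a) : ∃ l : K, ψ = l • φ := by
  obtain ⟨a, ha⟩ := DFunLike.ne_iff.1 hφ
  rw [LinearMap.zero_apply] at ha
  refine ⟨ψ a / φ a, LinearMap.ext fun b => ?_⟩
  rw [LinearMap.smul_apply, smul_eq_mul, div_mul_eq_mul_div, eq_div_iff ha]
  linear_combination h a b

namespace IsVSystem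

theorem of_saturated (h : IsVSystem f c r s d) (hts : t ⊆ s)
    (hr : ∀ i ∈ t, ∀ j ∈ t, ∀ k ∈ s, r i k j → k ∈ t) : IsVSystem f c r t d := by
  intro i hi j hj a b
  have hclass : {k ∈ t | r i k j} = {k ∈ s | r i k j} := by
    ext k
    simp only [mem_filter]
    exact ⟨fun hk => ⟨hts hk.1, hk.2⟩, fun hk => ⟨hr i hi j hj k hk.1 hk.2, hk.2⟩⟩
  rw [hclass]
  exact h i (hts hi) j (hts hj) a b

theorem sum_eq_zero (h : IsVSystem f c r t d) {i : ι} (hi : i ∈ t) (a b : V) :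
    ∑ k ∈ t, c k * f i (d k) * (f i a * f k b - f i b * f k a) = 0 :=
  sum_cancels_of_partition_cancels (r i) fun j hj => h i hi j hj a b

theorem exists_covectorForm_dual_eq_smul (h : IsVSystem f c r t d)
    (hd : ∀ i ∈ t, ∀ j ∈ t, f i (d j) = f j (d i)) {i : ι} (hi : i ∈ t) (hf : f i ≠ 0) :
    ∃ l : K, covectorForm f c t (d i) = l • f i := by
  have hform (v : V) : covectorForm f c t (d i) v = ∑ k ∈ t, c k * f i (d k) * f k v := by
    rw [covectorForm_apply]
    exact sum_congr rfl fun k hk => by rw [hd i hi k hk]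
  refine exists_eq_smul_of_mul_comm hf fun a b => sub_eq_zero.1 ?_
  rw [← h.sum_eq_zero hi a b, hform, hform, mul_sum, mul_sum, ← sum_sub_distrib]
  exact sum_congr rfl fun k _ => by ring

theorem exists_dual_eq_smul (h : IsVSystem f c r t d)
    (hd : ∀ i ∈ t, ∀ j ∈ t, f i (d j) = f j (d i)) (hdU : ∀ i ∈ t, d i ∈ U)
    (hU : ∀ u ∈ U, (∀ v ∈ U, covectorForm f c t u v = 0) → u = 0) (hdU' : ∀ i ∈ t, d' i ∈ U)
    (hd' : ∀ i ∈ t, ∀ u ∈ U, covectorForm f c t (d' i) u = f i u) {i : ι} (hi : i ∈ t)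
    (hf : f i ≠ 0) : ∃ l : K, d i = l • d' i := by
  obtain ⟨l, hl⟩ := h.exists_covectorForm_dual_eq_smul hd hi hf
  refine ⟨l, sub_eq_zero.1 <| hU _ (U.sub_mem (hdU i hi) (U.smul_mem l (hdU' i hi)))
    fun v hv => ?_⟩
  simp [hl, hd' i hi v hv]

theorem of_dual_eq_smul (h : IsVSystem f c r t d)
    (hd : ∀ i ∈ t, ∀ j ∈ t, f i (d j) = f j (d i))
    (hd' : ∀ i ∈ t, ∀ j ∈ t, f i (d' j) = f j (d' i))
    (hl : ∀ i ∈ t, f i ≠ 0 → ∃ l : K, l ≠ 0 ∧ d i = l • d' i) : IsVSystem f c r t d' := by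
  intro i hi j hj a b
  by_cases hf : f i = 0
  · simp [hf]
  obtain ⟨l, hl₀, hdl⟩ := hl i hi hf
  have hscale : ∀ k ∈ t, f i (d k) = l * f i (d' k) := fun k hk => by
    rw [hd i hi k hk, hdl, map_smul, smul_eq_mul, hd' i hi k hk]
  refine (mul_eq_zero.1 ?_).resolve_left hl₀
  rw [← h i hi j hj a b, mul_sum]
  exact sum_congr rfl fun k hk => by rw [hscale k (mem_filter.1 hk).1]; ring

end IsVSystem

theorem subsystem_is_trigVSystem_general (h : IsVSystem f c r s d)
    (hd : ∀ i ∈ s, ∀ v, covectorForm f c s (d i) v = f i v) (hts : t ⊆ s)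
    (hr : ∀ i ∈ t, ∀ j ∈ t, ∀ k ∈ s, r i k j → k ∈ t) (hdU : ∀ i ∈ t, d i ∈ U)
    (hU : ∀ u ∈ U, (∀ v ∈ U, covectorForm f c t u v = 0) → u = 0) (hdU' : ∀ i ∈ t, d' i ∈ U)
    (hd' : ∀ i ∈ t, ∀ u ∈ U, covectorForm f c t (d' i) u = f i u) : IsVSystem f c r t d' := by
  have ht : IsVSystem f c r t d := h.of_saturated hts hr
  have hsymm : ∀ i ∈ t, ∀ j ∈ t, f i (d j) = f j (d i) := fun i hi j hj =>
    apply_dual_comm (U := ⊤) (fun _ _ => trivial) (fun k hk v _ => hd k hk v) (hts hi) (hts hj)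
  refine ht.of_dual_eq_smul hsymm (fun i hi j hj => apply_dual_comm hdU' hd' hi hj) ?_
  intro i hi hf
  obtain ⟨l, hl⟩ := ht.exists_dual_eq_smul hsymm hdU hU hdU' hd' hi hf
  refine ⟨l, ?_, hl⟩
  rintro rfl
  exact hf (LinearMap.ext fun v => by rw [← hd i (hts hi) v, hl]; simp)

end VSystem

section Series

variable {N : ℕ} {α β γ : Fin N → ℂ} {A Γ : Finset (Fin N → ℂ)} {c : (Fin N → ℂ) → ℂ}
  {dual : (Fin N → ℂ) → Fin N → ℂ}

namespace SeriesRel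

theorem refl (α γ : Fin N → ℂ) : SeriesRel α γ γ :=
  ⟨0, Or.inr (by simp)⟩

theorem symm (h : SeriesRel α β γ) : SeriesRel α γ β := by
  obtain ⟨m, h | h⟩ := h
  · exact ⟨m, Or.inl (by rw [add_comm, h])⟩
  · exact ⟨-m, Or.inr (by rw [← neg_sub, h, Int.cast_neg, neg_smul])⟩

theorem trans {δ : Fin N → ℂ} (h : SeriesRel α β γ) (h' : SeriesRel α γ δ) :
    SeriesRel α β δ := by
  obtain ⟨m, h | h⟩ := h <;> obtain ⟨n, h' | h'⟩ := h'
  · exact ⟨m - n, Or.inr (by rw [Int.cast_sub, sub_smul, ← h, ← h']; abel)⟩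
  · exact ⟨m - n, Or.inl (by rw [Int.cast_sub, sub_smul, ← h, ← h']; abel)⟩
  · exact ⟨m + n, Or.inl (by rw [Int.cast_add, add_smul, ← h, ← h']; abel)⟩
  · exact ⟨m + n, Or.inr (by rw [Int.cast_add, add_smul, ← h, ← h']; abel)⟩

theorem mem_submodule {W : Submodule ℂ (Fin N → ℂ)} (h : SeriesRel α β γ) (hα : α ∈ W)
    (hγ : γ ∈ W) : β ∈ W := by
  obtain ⟨m, h | h⟩ := h
  · exact (W.add_mem_iff_left hγ).1 (h ▸ W.smul_mem _ hα)
  · exact (W.sub_mem_iff_left hγ).1 (h ▸ W.smul_mem _ hα)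

theorem collin (h : SeriesRel α β γ) (hγ : Collin α γ) : Collin α β := by
  obtain ⟨t, ht⟩ := hγ
  have hβ : β ∈ Submodule.span ℂ {α} := h.mem_submodule (Submodule.mem_span_singleton_self α)
    (Submodule.mem_span_singleton.2 ⟨t, ht.symm⟩)
  obtain ⟨u, hu⟩ := Submodule.mem_span_singleton.1 hβ
  exact ⟨u, hu.symm⟩

end SeriesRel

/-- The relation `γ₁ ∼ γ₂` defining the `α`-series, on all covectors rather than only on those not
proportional to `α`. -/
def seriesSetoid (α : Fin N → ℂ) : Setoid (Fin N → ℂ) where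
  r := SeriesRel α
  iseqv := ⟨SeriesRel.refl α, SeriesRel.symm, SeriesRel.trans⟩

theorem isSeries_iff : IsSeries A α Γ ↔
    ∃ γ ∈ A, ¬ Collin α γ ∧ Γ = {β ∈ A | SeriesRel α β γ} := by
  constructor
  · rintro ⟨⟨γ, hγ⟩, hmem, hrel, hmax⟩
    refine ⟨γ, (hmem γ hγ).1, (hmem γ hγ).2, ext fun β => ?_⟩
    rw [mem_filter]
    exact ⟨fun hβ => ⟨(hmem β hβ).1, hrel β hβ γ hγ⟩,
      fun ⟨hβ, h⟩ => hmax β hβ (fun hβα => (hmem γ hγ).2 (h.symm.collin hβα)) ⟨γ, hγ, h⟩⟩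
  · rintro ⟨γ, hγ, hγα, rfl⟩
    simp only [IsSeries, mem_filter]
    exact ⟨⟨γ, mem_filter.2 ⟨hγ, .refl α γ⟩⟩,
      fun β ⟨hβ, h⟩ => ⟨hβ, fun hβα => hγα (h.symm.collin hβα)⟩,
      fun β₁ h₁ β₂ h₂ => h₁.2.trans h₂.2.symm,
      fun β hβ _ ⟨β', hβ', h⟩ => ⟨hβ, h.trans hβ'.2⟩⟩

theorem wedge_eq_zero_of_collin (h : Collin α β) (a b : Fin N → ℂ) : wedge α β a b = 0 := by
  obtain ⟨t, rfl⟩ := h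
  simp only [wedge, ev, Pi.smul_apply, smul_eq_mul, mul_assoc, ← mul_sum]
  ring

/-- Covectors in `ℂ^N` as linear forms on `ℂ^N`. -/
abbrev evDual (α : Fin N → ℂ) : Module.Dual ℂ (Fin N → ℂ) :=
  dotProductBilin ℂ ℂ α

theorem covectorForm_evDual (u v : Fin N → ℂ) : covectorForm evDual c A u v = Gform A c u v :=
  covectorForm_apply u v

/-- A class of covectors proportional to `α` is not an `α`-series, but contributes nothing, since
`α ∧ β = 0` for each `β` in it. -/
theorem isTrigVSystem_iff_isVSystem :
    IsTrigVSystem A c dual ↔ IsVSystem evDual c seriesSetoid A dual := by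
  constructor
  · intro h α hα γ hγ a b
    by_cases hγα : Collin α γ
    · refine sum_eq_zero fun β hβ => mul_eq_zero_of_right _ ?_
      exact wedge_eq_zero_of_collin ((mem_filter.1 hβ).2.collin hγα) a b
    · exact h α hα _ (isSeries_iff.2 ⟨γ, hγ, hγα, rfl⟩) a b
  · intro h α hα Γ hΓ a b
    obtain ⟨γ, hγ, -, rfl⟩ := isSeries_iff.1 hΓ
    exact h α hα γ hγ a b

end Series

/-- a non-isotropic subsystem of a trigonometric ∨-system is again a
trigonometric ∨-system (with respect to its own form `G_B` and duals `β^{∨_B}`). -/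
theorem subsystem_is_trigVSystem {N : ℕ}
    (A : Finset (Fin N → ℂ)) (c : (Fin N → ℂ) → ℂ)
    (dual : (Fin N → ℂ) → Fin N → ℂ)
    (hA0 : ∀ α ∈ A, α ≠ (0 : Fin N → ℂ))
    (hnd : Nondeg A c)
    (hdual : IsDual A c dual)
    (hvsys : IsTrigVSystem A c dual)
    (W : Submodule ℂ (Fin N → ℂ)) (B : Finset (Fin N → ℂ))
    (hB : ∀ α : Fin N → ℂ, α ∈ B ↔ α ∈ A ∧ α ∈ W)
    (hWspan : W = Submodule.span ℂ (B : Set (Fin N → ℂ)))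
    (hiso : NonIsotropic B c dual)
    (dualB : (Fin N → ℂ) → Fin N → ℂ)
    (hdualB : ∀ β ∈ B, dualB β ∈ Wdual B dual ∧
      ∀ u ∈ Wdual B dual, Gform B c (dualB β) u = ev β u) :
    ∀ α ∈ B, ∀ Γ : Finset (Fin N → ℂ), IsSeries B α Γ →
      ∀ a b : Fin N → ℂ, ∑ β ∈ Γ, c β * ev α (dualB β) * wedge α β a b = 0 := by
  have hclosed : ∀ α ∈ B, ∀ γ ∈ B, ∀ β ∈ A, SeriesRel α β γ → β ∈ B := fun α hα γ hγ β hβ h =>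
    (hB β).2 ⟨hβ, h.mem_submodule ((hB α).1 hα).2 ((hB γ).1 hγ).2⟩
  simp only [IsDual, NonIsotropic, ← covectorForm_evDual] at hdual hiso hdualB
  exact isTrigVSystem_iff_isVSystem.2 <| subsystem_is_trigVSystem_general
    (isTrigVSystem_iff_isVSystem.1 hvsys) hdual (fun α hα => ((hB α).1 hα).1) hclosed
    (fun α hα => Submodule.subset_span (Set.mem_image_of_mem dual hα)) hiso
    (fun β hβ => (hdualB β hβ).1) (fun β hβ => (hdualB β hβ).2)

end
end

section
/- Let (𝒜,c) be a configuration in ℂ^N whose covectors belong to a lattice of rank N in (ℂ^N)*, let λ ∈ ℂ∖{0}, and suppose (𝒜,c,λ) satisfies the trigonometric WDVV equations. Let W ⊆ (ℂ^N)* be a subspace, B = 𝒜 ∩ W with span(B) = W, and let S = {α₁,…,α_k} ⊆ B be a basis of W; assume C_{δ_α}^{α₀} ≠ 0 for every α ∈ S and every α₀ ∈ δ_α. Let W_B = {x ∈ ℂ^N : β(x) = 0 for all β ∈ B}, assume the restriction of G_𝒜 to W_B is non-degenerate, and let the restricted configuration π_B(𝒜) on W_B consist of the nonzero restrictions ᾱ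 = α|_{W_B} of covectors α ∈ 𝒜∖B, the multiplicity of a covector ᾱ ∈ π_B(𝒜) being c_{ᾱ} = Σ c_α over all α ∈ 𝒜∖B with α|_{W_B} = ᾱ. Then the restricted configuration (π_B(𝒜), c), viewed as a configuration in W_B ≅ ℂ^n (n = dim W_B) via any linear isomorphism, together with the same constant λ satisfies the trigonometric WDVV equations, i.e. the matrices of third-order partial derivatives of the restricted prepotential F_B(ξ,y) = y³/3 + Σ_{ᾱ∈π_B(𝒜)} c_{ᾱ} ᾱ(ξ)² y + λ Σ_{ᾱ∈π_B(𝒜)} c_{ᾱ} f(ᾱ(ξ)) satisfy the WDVV matrix relations. -/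
open scoped Classical
open Finset

noncomputable section

/-- The restriction of a covector `α` to `W_B ≅ ℂ^n` via the parametrisation `φ`. -/
def resCov {N n : ℕ} (φ : (Fin n → ℂ) →ₗ[ℂ] (Fin N → ℂ)) (α : Fin N → ℂ) :
    Fin n → ℂ :=
  fun i => ev α (φ (Pi.single i 1))

/-- The set of nonzero restrictions of covectors of `𝒜 ∖ B` to `W_B`. -/
def resConfig {N n : ℕ} (A B : Finset (Fin N → ℂ))
    (φ : (Fin n → ℂ) →ₗ[ℂ] (Fin N → ℂ)) : Finset (Fin n → ℂ) :=
  ((A \ B).filter (fun α => resCov φ α ≠ 0)).image (resCov φ)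

/-- The multiplicity of a restricted covector: the sum of multiplicities of all
covectors of `𝒜 ∖ B` restricting to it. -/
def resMult {N n : ℕ} (A B : Finset (Fin N → ℂ)) (c : (Fin N → ℂ) → ℂ)
    (φ : (Fin n → ℂ) →ₗ[ℂ] (Fin N → ℂ)) (β : Fin n → ℂ) : ℂ :=
  ∑ α ∈ (A \ B).filter (fun α => resCov φ α = β), c α

/-!
The form `G_𝒜` and the third derivatives of the `cot` part of the prepotential define a product
`u ∗ a` of tangent vectors at `x` (`cotMul`), and WDVV is the vanishing of
`λ² (G(u ∗ a, v ∗ b) - G(v ∗ a, u ∗ b)) + 4 (G(u, a) G(v, b) - G(v, a) G(u, b))`.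
Let `γ` be one of the covectors of the basis `S`, let `γ(y) = 1`, and let `u`, `a` be tangent to the
hyperplane `γ = 0`. With `v = b = y` this expression has at most a simple pole along the hyperplane,
coming from the covectors proportional to `γ` in `y ∗ y`; its residue is a nonzero multiple of
`γ(u ∗ a)`. Hence `γ(u ∗ a) = 0` for every `γ ∈ S`, so that the tangent space of `W_B` is closed
under `∗`. The form and the product on `W_B` defined by the restricted configuration are therefore
the restrictions of the original ones, and the scalar identity extends by continuity to the points
of `W_B` and restricts to its tangent vectors.
-/

open Matrix Filter Topology

section ComplexAnalysis

theorem eventually_sin_add_mul_ne_zero {a b : ℂ} (h : Complex.sin a ≠ 0 ∨ b ≠ 0) :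
    ∀ᶠ t in 𝓝[≠] (0 : ℂ), Complex.sin (a + t * b) ≠ 0 := by
  by_cases ha : Complex.sin a = 0
  · have hcos : Complex.cos a ≠ 0 := fun hc ↦ by
      simpa [ha, hc] using Complex.sin_sq_add_cos_sq a
    have hderiv : HasDerivAt (fun t : ℂ ↦ Complex.sin (a + t * b))
        (Complex.cos (a + 0 * b) * (1 * b)) 0 :=
      (((hasDerivAt_id (0 : ℂ)).mul_const b).const_add a).csin
    exact hderiv.eventually_ne (by simpa [ha, hcos] using h)
  · have hcont : ContinuousAt (fun t : ℂ ↦ Complex.sin (a + t * b)) 0 := by fun_prop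
    exact (hcont.eventually_ne (by simpa using ha)).filter_mono nhdsWithin_le_nhds

theorem continuousAt_ccot {z : ℂ} (hz : Complex.sin z ≠ 0) : ContinuousAt ccot z :=
  Complex.continuous_cos.continuousAt.div Complex.continuous_sin.continuousAt hz

theorem tendsto_mul_ccot_mul {k : ℂ} (hk : k ≠ 0) :
    Tendsto (fun t : ℂ ↦ t * ccot (t * k)) (𝓝[≠] 0) (𝓝 k⁻¹) := by
  have hsin : Tendsto (fun t : ℂ ↦ t⁻¹ * Complex.sin (t * k)) (𝓝[≠] 0) (𝓝 k) := by
    simpa using ((hasDerivAt_id (0 : ℂ)).mul_const k).csin.tendsto_slope_zero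
  have hcos : Tendsto (fun t : ℂ ↦ Complex.cos (t * k)) (𝓝[≠] 0) (𝓝 1) := by
    have hcont : Continuous fun t : ℂ ↦ Complex.cos (t * k) := by fun_prop
    simpa using (hcont.tendsto 0).mono_left nhdsWithin_le_nhds
  refine (one_mul k⁻¹ ▸ hcos.mul (hsin.inv₀ hk)).congr fun t ↦ ?_
  rw [ccot, mul_inv, inv_inv]
  ring

theorem eq_of_continuousAt_of_mem_closure {X Y : Type*} [TopologicalSpace X] [TopologicalSpace Y]
    [T1Space Y] {f : X → Y} {s : Set X} {x : X} {y : Y} (hf : ContinuousAt f x)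
    (hx : x ∈ closure s) (h : ∀ z ∈ s, f z = y) : f x = y := by
  have himage : f '' s ⊆ {y} := Set.image_subset_iff.2 h
  simpa using closure_mono himage (mem_closure_image hf hx)

end ComplexAnalysis

section RegularPoints

variable {N : ℕ} {A : Finset (Fin N → ℂ)}

/-- The complement of the poles of the third derivatives of the prepotential. -/
def regularPoints (A : Finset (Fin N → ℂ)) : Set (Fin N → ℂ) :=
  {x | ∀ α ∈ A, Complex.sin (α ⬝ᵥ x) ≠ 0}

theorem eventually_add_smul_mem_regularPoints {x y : Fin N → ℂ}
    (h : ∀ α ∈ A, Complex.sin (α ⬝ᵥ x) ≠ 0 ∨ α ⬝ᵥ y ≠ 0) :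
    ∀ᶠ t in 𝓝[≠] (0 : ℂ), x + t • y ∈ regularPoints A := by
  refine (eventually_all_finset A).2 fun α hα ↦ ?_
  simpa [dotProduct_add] using eventually_sin_add_mul_ne_zero (h α hα)

theorem tendsto_add_smul_nhdsNE_zero (x y : Fin N → ℂ) :
    Tendsto (fun t : ℂ ↦ x + t • y) (𝓝[≠] 0) (𝓝 x) := by
  have hcont : Continuous fun t : ℂ ↦ x + t • y := by fun_prop
  simpa using (hcont.tendsto 0).mono_left nhdsWithin_le_nhds

theorem mem_closure_inter_regularPoints {H : Submodule ℂ (Fin N → ℂ)}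
    (hA : ∀ α ∈ A, ∃ y ∈ H, α ⬝ᵥ y ≠ 0) {x : Fin N → ℂ} (hx : x ∈ H) :
    x ∈ closure (H ∩ regularPoints A) := by
  obtain ⟨y, hyH, hy⟩ := Module.Dual.exists_forall_mem_ne_zero_of_forall_exists H
    (fun α : A ↦ dotProductBilin ℂ ℂ α.1) fun α ↦ hA α α.2
  refine mem_closure_of_tendsto (tendsto_add_smul_nhdsNE_zero x y) ?_
  filter_upwards [eventually_add_smul_mem_regularPoints fun α hα ↦ Or.inr (hy ⟨α, hα⟩)] with t ht
  exact ⟨H.add_mem hx (H.smul_mem t hyH), ht⟩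

theorem mem_closure_regularPoints (hA : ∀ α ∈ A, α ≠ 0) (x : Fin N → ℂ) :
    x ∈ closure (regularPoints A) := by
  have hmem := mem_closure_inter_regularPoints (A := A) (H := ⊤) (fun α hα ↦ ?_)
    (Submodule.mem_top (x := x))
  · exact closure_mono Set.inter_subset_right hmem
  · by_contra! h
    exact hA α hα (dotProduct_eq_zero α fun y ↦ h y Submodule.mem_top)

theorem exists_dotProduct_eq_zero_and_ne_zero_of_not_collin {γ α : Fin N → ℂ}
    (h : ¬ Collin γ α) : ∃ y, γ ⬝ᵥ y = 0 ∧ α ⬝ᵥ y ≠ 0 := by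
  by_contra! hker
  obtain ⟨t, ht⟩ := Submodule.mem_span_singleton.1 <| show
    dotProductBilin ℂ ℂ α ∈ Submodule.span ℂ {dotProductBilin ℂ ℂ γ} by
      simpa using mem_span_of_iInf_ker_le_ker (ι := Unit) (L := fun _ ↦ dotProductBilin ℂ ℂ γ)
        (K := dotProductBilin ℂ ℂ α) (by rw [iInf_const]; exact hker)
  exact h ⟨t, dotProduct_eq _ _ fun y ↦ by simpa using (LinearMap.congr_fun ht y).symm⟩

end RegularPoints
section Prepotential

variable {N : ℕ} {A : Finset (Fin N → ℂ)} {c : (Fin N → ℂ) → ℂ}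

/-- The Gram matrix of the form `G_𝒜`. -/
def gramMatrix (A : Finset (Fin N → ℂ)) (c : (Fin N → ℂ) → ℂ) : Matrix (Fin N) (Fin N) ℂ :=
  ∑ α ∈ A, c α • vecMulVec α α

/-- The covector `v ↦ ∑ c_α α(u) α(a) α(v) cot α(x)`, up to the factor `λ` the third derivative of
the prepotential at `x` with two arguments `u`, `a` filled in. -/
def cotCovector (A : Finset (Fin N → ℂ)) (c : (Fin N → ℂ) → ℂ) (x u a : Fin N → ℂ) :
    Fin N → ℂ :=
  ∑ α ∈ A, (c α * (α ⬝ᵥ u) * (α ⬝ᵥ a) * ccot (α ⬝ᵥ x)) • α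

/-- The matrix of the bilinear form `(a, v) ↦ cotCovector A c x u a ⬝ᵥ v`. -/
def cotMatrix (A : Finset (Fin N → ℂ)) (c : (Fin N → ℂ) → ℂ) (x u : Fin N → ℂ) :
    Matrix (Fin N) (Fin N) ℂ :=
  ∑ α ∈ A, (c α * (α ⬝ᵥ u) * ccot (α ⬝ᵥ x)) • vecMulVec α α

/-- The product of tangent vectors `u`, `a` at `x`: the vector `G_𝒜`-dual to `cotCovector`. -/
def cotMul (A : Finset (Fin N → ℂ)) (c : (Fin N → ℂ) → ℂ) (x u a : Fin N → ℂ) : Fin N → ℂ :=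
  (gramMatrix A c)⁻¹ *ᵥ cotCovector A c x u a

theorem Gform_eq_sum_dotProduct (u v : Fin N → ℂ) :
    Gform A c u v = ∑ α ∈ A, c α * ((α ⬝ᵥ u) * (α ⬝ᵥ v)) :=
  Finset.sum_congr rfl fun _ _ ↦ mul_assoc _ _ _

theorem Gform_comm (u v : Fin N → ℂ) : Gform A c u v = Gform A c v u := by
  simp only [Gform_eq_sum_dotProduct, mul_comm]

theorem Gform_add_right (u v w : Fin N → ℂ) :
    Gform A c u (v + w) = Gform A c u v + Gform A c u w := by
  simp only [Gform_eq_sum_dotProduct, dotProduct_add, mul_add, Finset.sum_add_distrib]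

theorem Gform_smul_right (t : ℂ) (u v : Fin N → ℂ) :
    Gform A c u (t • v) = t * Gform A c u v := by
  simp only [Gform_eq_sum_dotProduct, dotProduct_smul, smul_eq_mul, Finset.mul_sum]
  exact Finset.sum_congr rfl fun _ _ ↦ by ring

theorem gramMatrix_mulVec (u : Fin N → ℂ) :
    gramMatrix A c *ᵥ u = ∑ α ∈ A, (c α * (α ⬝ᵥ u)) • α := by
  rw [gramMatrix, sum_mulVec]
  refine Finset.sum_congr rfl fun α _ ↦ ?_
  rw [smul_mulVec, vecMulVec_mulVec, op_smul_eq_smul, smul_smul]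

theorem gramMatrix_mulVec_dotProduct (u v : Fin N → ℂ) :
    (gramMatrix A c *ᵥ u) ⬝ᵥ v = Gform A c u v := by
  simp only [gramMatrix_mulVec, Gform_eq_sum_dotProduct, sum_dotProduct, smul_dotProduct,
    smul_eq_mul, mul_assoc]

theorem cotMatrix_mulVec (x u a : Fin N → ℂ) :
    cotMatrix A c x u *ᵥ a = cotCovector A c x u a := by
  rw [cotMatrix, cotCovector, sum_mulVec]
  refine Finset.sum_congr rfl fun α _ ↦ ?_
  rw [smul_mulVec, vecMulVec_mulVec, op_smul_eq_smul, smul_smul, mul_right_comm]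

theorem cotCovector_dotProduct (x u a v : Fin N → ℂ) :
    cotCovector A c x u a ⬝ᵥ v
      = ∑ α ∈ A, c α * ((α ⬝ᵥ u) * (α ⬝ᵥ a) * ccot (α ⬝ᵥ x) * (α ⬝ᵥ v)) := by
  simp only [cotCovector, sum_dotProduct, smul_dotProduct, smul_eq_mul, mul_assoc]

theorem cotCovector_comm (x u a : Fin N → ℂ) :
    cotCovector A c x u a = cotCovector A c x a u := by
  simp only [cotCovector, mul_right_comm]

theorem cotCovector_dotProduct_right_comm (x u a v : Fin N → ℂ) :
    cotCovector A c x u a ⬝ᵥ v = cotCovector A c x u v ⬝ᵥ a := by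
  simp only [cotCovector_dotProduct]
  exact Finset.sum_congr rfl fun _ _ ↦ by ring

theorem nondeg_iff_isUnit_gramMatrix : Nondeg A c ↔ IsUnit (gramMatrix A c) := by
  rw [isUnit_iff_isUnit_det, isUnit_iff_ne_zero, ← separatingLeft_iff_det_ne_zero,
    separatingLeft_def]
  refine forall_congr' fun u ↦ imp_congr_left (forall_congr' fun v ↦ ?_)
  rw [dotProduct_comm, gramMatrix_mulVec_dotProduct, Gform_comm]

theorem gramMatrix_mulVec_cotMul (hA : Nondeg A c) (x u a : Fin N → ℂ) :
    gramMatrix A c *ᵥ cotMul A c x u a = cotCovector A c x u a := by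
  rw [cotMul, mulVec_mulVec, mul_nonsing_inv _
    ((isUnit_iff_isUnit_det _).1 (nondeg_iff_isUnit_gramMatrix.1 hA)), one_mulVec]

theorem Gform_cotMul_left (hA : Nondeg A c) (x u a v : Fin N → ℂ) :
    Gform A c (cotMul A c x u a) v = cotCovector A c x u a ⬝ᵥ v := by
  rw [← gramMatrix_mulVec_dotProduct, gramMatrix_mulVec_cotMul hA]

theorem cotMul_eq_of_forall_Gform (hA : Nondeg A c) {x u a w : Fin N → ℂ}
    (h : ∀ v, Gform A c w v = cotCovector A c x u a ⬝ᵥ v) : cotMul A c x u a = w := by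
  have hgram : gramMatrix A c *ᵥ w = cotCovector A c x u a :=
    dotProduct_eq _ _ fun v ↦ by rw [gramMatrix_mulVec_dotProduct, h]
  rw [cotMul, ← hgram, mulVec_mulVec, nonsing_inv_mul _
    ((isUnit_iff_isUnit_det _).1 (nondeg_iff_isUnit_gramMatrix.1 hA)), one_mulVec]

end Prepotential

section ScalarForm

variable {N : ℕ} {A : Finset (Fin N → ℂ)} {c : (Fin N → ℂ) → ℂ} {lam : ℂ}

/-- The third derivatives of the prepotential with one argument equal to `u ∈ ℂ^N`. -/
def dirFmat (A : Finset (Fin N → ℂ)) (c : (Fin N → ℂ) → ℂ) (lam : ℂ) (x u : Fin N → ℂ) :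
    Matrix (Fin N ⊕ Unit) (Fin N ⊕ Unit) ℂ :=
  ∑ i, u i • Fmat A c lam i x

/-- Twice the pairing of `(a, 0)` with `(F_u F_{N+1}⁻¹ F_v - F_v F_{N+1}⁻¹ F_u) (b, 0)`: the
obstruction to the WDVV equations in the directions `u`, `v`. -/
def wdvvDefect (A : Finset (Fin N → ℂ)) (c : (Fin N → ℂ) → ℂ) (lam : ℂ)
    (x u v a b : Fin N → ℂ) : ℂ :=
  lam ^ 2 * (Gform A c (cotMul A c x u a) (cotMul A c x v b)
      - Gform A c (cotMul A c x v a) (cotMul A c x u b))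
    + 4 * (Gform A c u a * Gform A c v b - Gform A c v a * Gform A c u b)

theorem Flast_eq_fromBlocks :
    Flast A c = fromBlocks ((2 : ℂ) • gramMatrix A c) 0 0 ((2 : ℂ) • (1 : Matrix Unit Unit ℂ)) := by
  ext (p | p) (q | q) <;>
    simp [Flast, gramMatrix, Matrix.sum_apply, vecMulVec_apply, mul_assoc]

theorem isUnit_Flast_iff : IsUnit (Flast A c) ↔ Nondeg A c := by
  rw [Flast_eq_fromBlocks, isUnit_fromBlocks_zero₁₂, nondeg_iff_isUnit_gramMatrix]
  simp [isUnit_iff_isUnit_det]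

theorem dirFmat_single (x : Fin N → ℂ) (i : Fin N) :
    dirFmat A c lam x (Pi.single i 1) = Fmat A c lam i x := by
  simp [dirFmat, Pi.single_apply]

theorem dirFmat_eq_fromBlocks (x u : Fin N → ℂ) :
    dirFmat A c lam x u = fromBlocks (lam • cotMatrix A c x u)
      (replicateCol Unit ((2 : ℂ) • (gramMatrix A c *ᵥ u)))
      (replicateRow Unit ((2 : ℂ) • (gramMatrix A c *ᵥ u))) 0 := by
  ext (p | p) (q | q)
  · simp only [dirFmat, Fmat, cotMatrix, Matrix.sum_apply, Matrix.smul_apply, of_apply, smul_eq_mul,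
      fromBlocks_apply₁₁, vecMulVec_apply, dotProduct, ev, Finset.mul_sum, Finset.sum_mul]
    rw [Finset.sum_comm]
    exact Finset.sum_congr rfl fun _ _ ↦ Finset.sum_congr rfl fun _ _ ↦ by ring
  · simp only [dirFmat, Fmat, Matrix.sum_apply, Matrix.smul_apply, of_apply, smul_eq_mul,
      fromBlocks_apply₁₂, replicateCol_apply, gramMatrix_mulVec, Finset.sum_apply, Pi.smul_apply,
      dotProduct, Finset.mul_sum, Finset.sum_mul]
    rw [Finset.sum_comm]
    exact Finset.sum_congr rfl fun _ _ ↦ Finset.sum_congr rfl fun _ _ ↦ by ring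
  · simp only [dirFmat, Fmat, Matrix.sum_apply, Matrix.smul_apply, of_apply, smul_eq_mul,
      fromBlocks_apply₂₁, replicateRow_apply, gramMatrix_mulVec, Finset.sum_apply, Pi.smul_apply,
      dotProduct, Finset.mul_sum, Finset.sum_mul]
    rw [Finset.sum_comm]
    exact Finset.sum_congr rfl fun _ _ ↦ Finset.sum_congr rfl fun _ _ ↦ by ring
  · simp [dirFmat, Fmat, Matrix.sum_apply]

theorem dirFmat_mulVec (x u a : Fin N → ℂ) (s : ℂ) :
    dirFmat A c lam x u *ᵥ Sum.elim a (fun _ ↦ s) =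
      Sum.elim (lam • cotCovector A c x u a + (2 * s) • (gramMatrix A c *ᵥ u))
        (fun _ ↦ 2 * Gform A c u a) := by
  have hcol (w : Fin N → ℂ) : replicateCol Unit w *ᵥ (fun _ ↦ s) = s • w := by
    ext p
    simp [mulVec, dotProduct, mul_comm]
  have hrow (w : Fin N → ℂ) : replicateRow Unit w *ᵥ a = fun _ ↦ w ⬝ᵥ a := rfl
  rw [dirFmat_eq_fromBlocks, fromBlocks_mulVec, Sum.elim_comp_inl, Sum.elim_comp_inr, hcol, hrow,
    smul_mulVec, cotMatrix_mulVec, zero_mulVec, add_zero, smul_smul, mul_comm s, smul_dotProduct,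
    gramMatrix_mulVec_dotProduct, smul_eq_mul]

theorem Flast_mulVec (a : Fin N → ℂ) (s : ℂ) :
    Flast A c *ᵥ Sum.elim a (fun _ ↦ s) =
      Sum.elim ((2 : ℂ) • (gramMatrix A c *ᵥ a)) (fun _ ↦ 2 * s) := by
  rw [Flast_eq_fromBlocks, fromBlocks_mulVec, Sum.elim_comp_inl, Sum.elim_comp_inr, zero_mulVec,
    zero_mulVec, add_zero, zero_add, smul_mulVec, smul_mulVec, one_mulVec]
  rfl

theorem inv_Flast_mul_dirFmat_mulVec (hA : Nondeg A c) (x u a : Fin N → ℂ) (s : ℂ) :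
    ((Flast A c)⁻¹ * dirFmat A c lam x u) *ᵥ Sum.elim a (fun _ ↦ s) =
      Sum.elim ((lam / 2) • cotMul A c x u a + s • u) (fun _ ↦ Gform A c u a) := by
  have hFlast : dirFmat A c lam x u *ᵥ Sum.elim a (fun _ ↦ s) = Flast A c *ᵥ
      Sum.elim ((lam / 2) • cotMul A c x u a + s • u) (fun _ ↦ Gform A c u a) := by
    rw [dirFmat_mulVec, Flast_mulVec, mulVec_add, mulVec_smul, mulVec_smul,
      gramMatrix_mulVec_cotMul hA, smul_add, smul_smul, smul_smul, mul_div_cancel₀ lam two_ne_zero]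
  rw [← mulVec_mulVec, hFlast, mulVec_mulVec,
    nonsing_inv_mul _ ((isUnit_iff_isUnit_det _).1 (isUnit_Flast_iff.2 hA)), one_mulVec]

theorem sumElim_dotProduct_dirFmat_mul_mulVec (hA : Nondeg A c) (x u v a b : Fin N → ℂ) (s t : ℂ) :
    Sum.elim a (fun _ : Unit ↦ s) ⬝ᵥ
        (dirFmat A c lam x u * (Flast A c)⁻¹ * dirFmat A c lam x v) *ᵥ Sum.elim b (fun _ ↦ t) =
      lam ^ 2 / 2 * Gform A c (cotMul A c x u a) (cotMul A c x v b)
        + 2 * (Gform A c u a * Gform A c v b)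
        + lam * (t * (cotCovector A c x u v ⬝ᵥ a) + s * (cotCovector A c x u v ⬝ᵥ b))
        + 2 * s * t * Gform A c u v := by
  have hs : Gform A c u (cotMul A c x v b) = cotCovector A c x u v ⬝ᵥ b := by
    rw [Gform_comm, Gform_cotMul_left hA, cotCovector_dotProduct_right_comm, cotCovector_comm]
  have ha : a ⬝ᵥ cotCovector A c x u (cotMul A c x v b)
      = Gform A c (cotMul A c x u a) (cotMul A c x v b) := by
    rw [dotProduct_comm, cotCovector_dotProduct_right_comm, Gform_cotMul_left hA]
  have hunit (p q : ℂ) : (fun _ : Unit ↦ p) ⬝ᵥ (fun _ ↦ q) = p * q := by simp [dotProduct]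
  rw [Matrix.mul_assoc, ← mulVec_mulVec, inv_Flast_mul_dirFmat_mulVec hA, dirFmat_mulVec,
    sumElim_dotProduct_sumElim, ← cotMatrix_mulVec, mulVec_add, mulVec_smul, mulVec_smul,
    cotMatrix_mulVec, cotMatrix_mulVec, Gform_add_right, Gform_smul_right, Gform_smul_right, hs,
    dotProduct_add, dotProduct_smul, dotProduct_add, dotProduct_smul, dotProduct_smul,
    dotProduct_smul, ha, dotProduct_comm a, dotProduct_comm a, gramMatrix_mulVec_dotProduct,
    hunit]
  ring

theorem dirFmat_commute_iff (hA : Nondeg A c) (x u v : Fin N → ℂ) :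
    dirFmat A c lam x u * (Flast A c)⁻¹ * dirFmat A c lam x v
      = dirFmat A c lam x v * (Flast A c)⁻¹ * dirFmat A c lam x u ↔
    ∀ a b, wdvvDefect A c lam x u v a b = 0 := by
  have hdiff (a b : Fin N → ℂ) (s t : ℂ) : 2 * (Sum.elim a (fun _ : Unit ↦ s) ⬝ᵥ
        (dirFmat A c lam x u * (Flast A c)⁻¹ * dirFmat A c lam x v) *ᵥ Sum.elim b (fun _ ↦ t)
      - Sum.elim a (fun _ ↦ s) ⬝ᵥ
        (dirFmat A c lam x v * (Flast A c)⁻¹ * dirFmat A c lam x u) *ᵥ Sum.elim b (fun _ ↦ t))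
      = wdvvDefect A c lam x u v a b := by
    rw [sumElim_dotProduct_dirFmat_mul_mulVec hA, sumElim_dotProduct_dirFmat_mul_mulVec hA,
      cotCovector_comm x v u, Gform_comm v u, wdvvDefect]
    ring
  constructor
  · intro h a b
    rw [← hdiff a b 0 0, h, sub_self, mul_zero]
  · intro h
    refine ext_iff_mulVec.2 fun z ↦ dotProduct_eq _ _ fun w ↦ ?_
    have hw (w : Fin N ⊕ Unit → ℂ) : w = Sum.elim (w ∘ Sum.inl) fun _ ↦ w (Sum.inr ()) :=
      (Sum.elim_comp_inl_inr w).symm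
    rw [dotProduct_comm, dotProduct_comm _ w, hw w, hw z, ← sub_eq_zero]
    exact (mul_eq_zero.1 ((hdiff _ _ _ _).trans (h _ _))).resolve_left two_ne_zero

theorem satisfiesWDVV_iff : SatisfiesWDVV A c lam ↔ Nondeg A c ∧
    ∀ x ∈ regularPoints A, ∀ u v a b, wdvvDefect A c lam x u v a b = 0 := by
  rw [SatisfiesWDVV, isUnit_Flast_iff]
  refine and_congr_right fun hA ↦ forall₂_congr fun x _ ↦ ?_
  simp only [← dirFmat_commute_iff hA]
  constructor
  · intro h u v
    simp only [dirFmat, Finset.sum_mul, Finset.mul_sum, Matrix.smul_mul, Matrix.mul_smul]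
    rw [Finset.sum_comm]
    exact Finset.sum_congr rfl fun i _ ↦ Finset.sum_congr rfl fun j _ ↦ by rw [h, smul_comm]
  · intro h i j
    simpa only [dirFmat_single] using h (Pi.single i 1) (Pi.single j 1)

end ScalarForm

section Continuity

variable {N : ℕ} {A : Finset (Fin N → ℂ)} {c : (Fin N → ℂ) → ℂ} {lam : ℂ} {x u v a b : Fin N → ℂ}

theorem tendsto_dotProduct {ι : Type*} {l : Filter ι} {f g : ι → Fin N → ℂ}
    (hf : Tendsto f l (𝓝 u)) (hg : Tendsto g l (𝓝 v)) :
    Tendsto (fun i ↦ f i ⬝ᵥ g i) l (𝓝 (u ⬝ᵥ v)) :=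
  tendsto_finsetSum _ fun j _ ↦ (tendsto_pi_nhds.1 hf j).mul (tendsto_pi_nhds.1 hg j)

theorem tendsto_Gform {ι : Type*} {l : Filter ι} {f g : ι → Fin N → ℂ} (hf : Tendsto f l (𝓝 u))
    (hg : Tendsto g l (𝓝 v)) :
    Tendsto (fun i ↦ Gform A c (f i) (g i)) l (𝓝 (Gform A c u v)) := by
  simp only [Gform_eq_sum_dotProduct]
  exact tendsto_finsetSum A fun α _ ↦ ((tendsto_dotProduct tendsto_const_nhds hf).mul
    (tendsto_dotProduct tendsto_const_nhds hg)).const_mul (c α)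

theorem continuousAt_cotCovector
    (h : ∀ α ∈ A, Complex.sin (α ⬝ᵥ x) ≠ 0 ∨ α ⬝ᵥ u = 0 ∨ α ⬝ᵥ a = 0) :
    ContinuousAt (fun z ↦ cotCovector A c z u a) x := by
  simp only [cotCovector]
  refine tendsto_finsetSum A fun α hα ↦ ?_
  rcases h α hα with hsin | hu | ha
  · have hdot : ContinuousAt (fun z : Fin N → ℂ ↦ α ⬝ᵥ z) x := by fun_prop
    have hcot : ContinuousAt (fun z : Fin N → ℂ ↦ ccot (α ⬝ᵥ z)) x :=
      (continuousAt_ccot hsin).comp hdot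
    exact (hcot.const_mul _).smul_const α
  · simp [hu]
  · simp [ha]

theorem continuousAt_cotMul
    (h : ∀ α ∈ A, Complex.sin (α ⬝ᵥ x) ≠ 0 ∨ α ⬝ᵥ u = 0 ∨ α ⬝ᵥ a = 0) :
    ContinuousAt (fun z ↦ cotMul A c z u a) x :=
  (continuous_const.matrix_mulVec continuous_id).continuousAt.comp (continuousAt_cotCovector h)

theorem continuousAt_Gform_cotMul_cotMul
    (h : ∀ α ∈ A, Complex.sin (α ⬝ᵥ x) ≠ 0 ∨
      (α ⬝ᵥ u = 0 ∨ α ⬝ᵥ a = 0) ∧ (α ⬝ᵥ v = 0 ∨ α ⬝ᵥ b = 0)) :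
    ContinuousAt (fun z ↦ Gform A c (cotMul A c z u a) (cotMul A c z v b)) x :=
  tendsto_Gform (continuousAt_cotMul fun α hα ↦ (h α hα).imp_right And.left)
    (continuousAt_cotMul fun α hα ↦ (h α hα).imp_right And.right)

theorem wdvvDefect_eq_zero_of_forall_mem_regularPoints (hA0 : ∀ α ∈ A, α ≠ 0)
    (hdefect : ∀ z ∈ regularPoints A, wdvvDefect A c lam z u v a b = 0)
    (h : ∀ α ∈ A, Complex.sin (α ⬝ᵥ x) ≠ 0 ∨ α ⬝ᵥ u = 0 ∧ α ⬝ᵥ v = 0) :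
    wdvvDefect A c lam x u v a b = 0 := by
  have huv := continuousAt_Gform_cotMul_cotMul (c := c) (x := x) (u := u) (v := v) (a := a) (b := b)
    fun α hα ↦ (h α hα).imp_right (And.imp Or.inl Or.inl)
  have hvu := continuousAt_Gform_cotMul_cotMul (c := c) (x := x) (u := v) (v := u) (a := a) (b := b)
    fun α hα ↦ (h α hα).imp_right fun hα' ↦ ⟨.inl hα'.2, .inl hα'.1⟩
  have hcont : ContinuousAt (fun z ↦ wdvvDefect A c lam z u v a b) x :=
    ((huv.sub hvu).const_mul (lam ^ 2)).add continuousAt_const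
  exact (eq_of_continuousAt_of_mem_closure hcont (mem_closure_regularPoints hA0 x) hdefect :)

end Continuity

section Residue

variable {N : ℕ} {A : Finset (Fin N → ℂ)} {c : (Fin N → ℂ) → ℂ} {lam : ℂ}
  {γ x u a y : Fin N → ℂ}

/-- The sum `∑ c_α α(y)²` over the covectors `α ∈ 𝒜` proportional to `γ`. It is the constant
`C_{δ_γ}^γ` when `γ(y) = 1`. -/
def collinWeight (A : Finset (Fin N → ℂ)) (c : (Fin N → ℂ) → ℂ) (γ y : Fin N → ℂ) : ℂ :=
  ∑ α ∈ A with Collin γ α, c α * (α ⬝ᵥ y) ^ 2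

theorem tendsto_smul_cotCovector (hγx : γ ⬝ᵥ x = 0) (hγy : γ ⬝ᵥ y = 1)
    (hx : x ∈ regularPoints {α ∈ A | ¬ Collin γ α}) :
    Tendsto (fun t : ℂ ↦ t • cotCovector A c (x + t • y) y y) (𝓝[≠] 0)
      (𝓝 (collinWeight A c γ y • γ)) := by
  rw [collinWeight, Finset.sum_smul, Finset.sum_filter]
  simp only [cotCovector, Finset.smul_sum]
  refine tendsto_finsetSum A fun α hα ↦ ?_
  split_ifs with hγα
  · obtain ⟨k, rfl⟩ := hγα
    rcases eq_or_ne k 0 with rfl | hk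
    · simp
    have hlim := ((tendsto_mul_ccot_mul hk).const_mul (c (k • γ) * k * k)).smul_const (k • γ)
    simp only [smul_dotProduct, dotProduct_add, dotProduct_smul, hγx, hγy, smul_eq_mul, mul_one,
      mul_zero, zero_add]
    convert hlim using 2 with t
    · rw [smul_smul, mul_left_comm, mul_comm t k, mul_comm k t]
    · rw [smul_smul]
      congr 1
      field_simp
  · have hcot : Tendsto (fun t : ℂ ↦ ccot (α ⬝ᵥ (x + t • y))) (𝓝[≠] 0) (𝓝 (ccot (α ⬝ᵥ x))) := by
      have hsin : Complex.sin (α ⬝ᵥ x) ≠ 0 := hx α (by simp [hα, hγα])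
      have hdot : ContinuousAt (fun z : Fin N → ℂ ↦ α ⬝ᵥ z) x := by fun_prop
      exact ((continuousAt_ccot hsin).comp hdot).tendsto.comp (tendsto_add_smul_nhdsNE_zero x y)
    have ht : Tendsto (fun t : ℂ ↦ t) (𝓝[≠] 0) (𝓝 0) := nhdsWithin_le_nhds
    simpa using ht.smul ((hcot.const_mul (c α * (α ⬝ᵥ y) * (α ⬝ᵥ y))).smul_const α)

theorem tendsto_mul_Gform_cotMul (hA : Nondeg A c) (hγx : γ ⬝ᵥ x = 0) (hγy : γ ⬝ᵥ y = 1)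
    (hx : x ∈ regularPoints {α ∈ A | ¬ Collin γ α})
    (h : ∀ α ∈ A, Complex.sin (α ⬝ᵥ x) ≠ 0 ∨ α ⬝ᵥ u = 0 ∨ α ⬝ᵥ a = 0) :
    Tendsto (fun t : ℂ ↦ t * Gform A c (cotMul A c (x + t • y) u a) (cotMul A c (x + t • y) y y))
      (𝓝[≠] 0) (𝓝 (collinWeight A c γ y * (γ ⬝ᵥ cotMul A c x u a))) := by
  have hua : Tendsto (fun t : ℂ ↦ cotMul A c (x + t • y) u a) (𝓝[≠] 0) (𝓝 (cotMul A c x u a)) :=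
    (continuousAt_cotMul h).tendsto.comp (tendsto_add_smul_nhdsNE_zero x y)
  have hyy := tendsto_smul_cotCovector (c := c) hγx hγy hx
  rw [← smul_eq_mul (collinWeight A c γ y), ← smul_dotProduct]
  refine (tendsto_dotProduct hyy hua).congr fun t ↦ ?_
  rw [Gform_comm, Gform_cotMul_left hA, smul_dotProduct, smul_eq_mul]

theorem dotProduct_cotMul_eq_zero_of_mem_regularPoints (hA0 : ∀ α ∈ A, α ≠ 0) (hA : Nondeg A c)
    (hlam : lam ≠ 0)
    (hdefect : ∀ z ∈ regularPoints A, ∀ u v a b, wdvvDefect A c lam z u v a b = 0)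
    (hγy : γ ⬝ᵥ y = 1) (hweight : collinWeight A c γ y ≠ 0)
    (hγx : γ ⬝ᵥ x = 0) (hγu : γ ⬝ᵥ u = 0) (hγa : γ ⬝ᵥ a = 0)
    (hx : x ∈ regularPoints {α ∈ A | ¬ Collin γ α}) :
    γ ⬝ᵥ cotMul A c x u a = 0 := by
  have hcases (α) (hα : α ∈ A) :
      Complex.sin (α ⬝ᵥ x) ≠ 0 ∨ α ⬝ᵥ u = 0 ∧ α ⬝ᵥ a = 0 ∧ α ⬝ᵥ y ≠ 0 := by
    by_cases hγα : Collin γ α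
    · obtain ⟨k, rfl⟩ := hγα
      have hk : k ≠ 0 := fun hk ↦ hA0 _ hα (by simp [hk])
      simp [hγu, hγa, hγy, hk]
    · exact .inl (hx α (by simp [hα, hγα]))
  have ht : Tendsto (fun t : ℂ ↦ t) (𝓝[≠] 0) (𝓝 0) := nhdsWithin_le_nhds
  have hpolar := tendsto_mul_Gform_cotMul (u := u) (a := a) hA hγx hγy hx
    fun α hα ↦ (hcases α hα).imp_right fun h ↦ .inl h.1
  have hregular : Tendsto (fun t : ℂ ↦ Gform A c (cotMul A c (x + t • y) y a)
      (cotMul A c (x + t • y) u y)) (𝓝[≠] 0)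
      (𝓝 (Gform A c (cotMul A c x y a) (cotMul A c x u y))) :=
    (continuousAt_Gform_cotMul_cotMul fun α hα ↦ (hcases α hα).imp_right
      fun h ↦ ⟨.inr h.2.1, .inl h.1⟩).tendsto.comp (tendsto_add_smul_nhdsNE_zero x y)
  -- `t` times the defect at `x + t • y` in the directions `u`, `y` on the vectors `a`, `y`
  have hlim := ((hpolar.sub (ht.mul hregular)).const_mul (lam ^ 2)).add
    (ht.mul_const (4 * (Gform A c u a * Gform A c y y - Gform A c y a * Gform A c u y)))
  have hzero := tendsto_nhds_unique_of_eventuallyEq hlim tendsto_const_nhds <|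
    (eventually_add_smul_mem_regularPoints fun α hα ↦
      (hcases α hα).imp_right fun h ↦ h.2.2).mono fun t hregt ↦ show _ = (0 : ℂ) by
        have hdefect_t := hdefect _ hregt u y a y
        rw [wdvvDefect] at hdefect_t
        linear_combination t * hdefect_t
  simpa [hlam, hweight] using hzero

theorem dotProduct_cotMul_eq_zero (hA0 : ∀ α ∈ A, α ≠ 0) (hA : Nondeg A c) (hlam : lam ≠ 0)
    (hdefect : ∀ z ∈ regularPoints A, ∀ u v a b, wdvvDefect A c lam z u v a b = 0)
    (hγy : γ ⬝ᵥ y = 1) (hweight : collinWeight A c γ y ≠ 0)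
    (hγx : γ ⬝ᵥ x = 0) (hγu : γ ⬝ᵥ u = 0) (hγa : γ ⬝ᵥ a = 0)
    (h : ∀ α ∈ A, Complex.sin (α ⬝ᵥ x) ≠ 0 ∨ α ⬝ᵥ u = 0 ∨ α ⬝ᵥ a = 0) :
    γ ⬝ᵥ cotMul A c x u a = 0 := by
  have hdense : x ∈ closure ((LinearMap.ker (dotProductBilin ℂ ℂ γ) : Set (Fin N → ℂ)) ∩
      regularPoints {α ∈ A | ¬ Collin γ α}) :=
    mem_closure_inter_regularPoints (fun α hα ↦
      exists_dotProduct_eq_zero_and_ne_zero_of_not_collin (Finset.mem_filter.1 hα).2) hγx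
  have hcont : ContinuousAt (fun z ↦ γ ⬝ᵥ cotMul A c z u a) x :=
    tendsto_dotProduct tendsto_const_nhds (continuousAt_cotMul h)
  exact (eq_of_continuousAt_of_mem_closure hcont hdense fun z hz ↦
    dotProduct_cotMul_eq_zero_of_mem_regularPoints hA0 hA hlam hdefect hγy hweight
      hz.1 hγu hγa hz.2 :)

theorem dotProduct_cotMul_eq_zero_of_mem_span {ι : Type*} {S : ι → Fin N → ℂ}
    (hA0 : ∀ α ∈ A, α ≠ 0) (hA : Nondeg A c) (hlam : lam ≠ 0)
    (hdefect : ∀ z ∈ regularPoints A, ∀ u v a b, wdvvDefect A c lam z u v a b = 0)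
    (hS0 : ∀ i, S i ≠ 0) (hweight : ∀ i y, S i ⬝ᵥ y = 1 → collinWeight A c (S i) y ≠ 0)
    (hSx : ∀ i, S i ⬝ᵥ x = 0) (hSu : ∀ i, S i ⬝ᵥ u = 0) (hSa : ∀ i, S i ⬝ᵥ a = 0)
    (h : ∀ α ∈ A, Complex.sin (α ⬝ᵥ x) ≠ 0 ∨ α ⬝ᵥ u = 0 ∨ α ⬝ᵥ a = 0)
    (hγ : γ ∈ Submodule.span ℂ (Set.range S)) : γ ⬝ᵥ cotMul A c x u a = 0 := by
  suffices hspan : Submodule.span ℂ (Set.range S) ≤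
      LinearMap.ker ((dotProductBilin ℂ ℂ).flip (cotMul A c x u a)) from hspan hγ
  rw [Submodule.span_le]
  rintro _ ⟨i, rfl⟩
  obtain ⟨y, hy⟩ : ∃ y, S i ⬝ᵥ y ≠ 0 := by
    by_contra! hSi
    exact hS0 i (dotProduct_eq_zero _ hSi)
  have hy1 : S i ⬝ᵥ ((S i ⬝ᵥ y)⁻¹ • y) = 1 := by
    rw [dotProduct_smul, smul_eq_mul, inv_mul_cancel₀ hy]
  exact dotProduct_cotMul_eq_zero hA0 hA hlam hdefect hy1 (hweight i _ hy1) (hSx i) (hSu i) (hSa i)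
    h

end Residue

section Restriction

variable {N n : ℕ} {A B : Finset (Fin N → ℂ)} {c : (Fin N → ℂ) → ℂ} {lam : ℂ}
  {φ : (Fin n → ℂ) →ₗ[ℂ] (Fin N → ℂ)} {ξ : Fin n → ℂ}

theorem resCov_dotProduct (α : Fin N → ℂ) (w : Fin n → ℂ) : resCov φ α ⬝ᵥ w = α ⬝ᵥ φ w := by
  have hcomp : dotProductBilin ℂ ℂ (resCov φ α) = (dotProductBilin ℂ ℂ α).comp φ :=
    LinearMap.pi_ext' fun i ↦ LinearMap.ext_ring (dotProduct_single_one (resCov φ α) i)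
  exact LinearMap.congr_fun hcomp w

theorem sum_resConfig (hB : ∀ β ∈ B, resCov φ β = 0) {h : (Fin n → ℂ) → ℂ} (h0 : h 0 = 0) :
    ∑ β ∈ resConfig A B φ, resMult A B c φ β * h β = ∑ α ∈ A, c α * h (resCov φ α) := by
  have hsupport : ∑ α ∈ A \ B with resCov φ α ≠ 0, c α * h (resCov φ α)
      = ∑ α ∈ A, c α * h (resCov φ α) := by
    refine Finset.sum_subset
      ((Finset.filter_subset _ _).trans Finset.sdiff_subset) fun α hα hα' ↦ ?_
    have hres : resCov φ α = 0 := by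
      by_contra hne
      have hαB : α ∉ B := fun hαB ↦ hne (hB α hαB)
      exact hα' (by simp [hα, hαB, hne])
    rw [hres, h0, mul_zero]
  rw [← hsupport, resConfig]
  refine Finset.sum_image' _ fun α hα ↦ ?_
  have hne := (Finset.mem_filter.1 hα).2
  rw [resMult, Finset.sum_mul, Finset.filter_filter]
  refine Finset.sum_congr (Finset.filter_congr fun α' _ ↦ ?_) fun α' hα' ↦ ?_
  · exact ⟨fun h ↦ ⟨h ▸ hne, h⟩, And.right⟩
  · rw [(Finset.mem_filter.1 hα').2.2]

theorem sin_ne_zero_or_forall_dotProduct_map_eq_zero (hB : ∀ β ∈ B, resCov φ β = 0)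
    (hξ : ξ ∈ regularPoints (resConfig A B φ)) {α : Fin N → ℂ} (hα : α ∈ A) :
    Complex.sin (α ⬝ᵥ φ ξ) ≠ 0 ∨ ∀ w, α ⬝ᵥ φ w = 0 := by
  simp only [← resCov_dotProduct]
  by_cases hres : resCov φ α = 0
  · simp [hres]
  · have hαB : α ∉ B := fun hαB ↦ hres (hB α hαB)
    exact .inl (hξ _ (Finset.mem_image_of_mem _ (by simp [hα, hαB, hres])))

theorem Gform_resConfig (hB : ∀ β ∈ B, resCov φ β = 0) (u v : Fin n → ℂ) :
    Gform (resConfig A B φ) (resMult A B c φ) u v = Gform A c (φ u) (φ v) := by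
  rw [Gform_eq_sum_dotProduct, Gform_eq_sum_dotProduct,
    sum_resConfig hB (h := fun β ↦ (β ⬝ᵥ u) * (β ⬝ᵥ v)) (by simp)]
  simp only [resCov_dotProduct]

theorem cotCovector_resConfig_dotProduct (hB : ∀ β ∈ B, resCov φ β = 0) (u a v : Fin n → ℂ) :
    cotCovector (resConfig A B φ) (resMult A B c φ) ξ u a ⬝ᵥ v
      = cotCovector A c (φ ξ) (φ u) (φ a) ⬝ᵥ φ v := by
  rw [cotCovector_dotProduct, cotCovector_dotProduct, sum_resConfig hB
    (h := fun β ↦ (β ⬝ᵥ u) * (β ⬝ᵥ a) * ccot (β ⬝ᵥ ξ) * (β ⬝ᵥ v)) (by simp)]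
  simp only [resCov_dotProduct]

theorem map_cotMul_resConfig (hB : ∀ β ∈ B, resCov φ β = 0) (hA : Nondeg A c)
    (hA' : Nondeg (resConfig A B φ) (resMult A B c φ)) {u a : Fin n → ℂ}
    (hrange : cotMul A c (φ ξ) (φ u) (φ a) ∈ Set.range φ) :
    φ (cotMul (resConfig A B φ) (resMult A B c φ) ξ u a) = cotMul A c (φ ξ) (φ u) (φ a) := by
  obtain ⟨w, hw⟩ := hrange
  rw [cotMul_eq_of_forall_Gform hA' (w := w), hw]
  intro v
  rw [Gform_resConfig hB, hw, Gform_cotMul_left hA, cotCovector_resConfig_dotProduct hB]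

theorem wdvvDefect_resConfig (hB : ∀ β ∈ B, resCov φ β = 0)
    (hmul : ∀ u a, φ (cotMul (resConfig A B φ) (resMult A B c φ) ξ u a)
      = cotMul A c (φ ξ) (φ u) (φ a)) (u v a b : Fin n → ℂ) :
    wdvvDefect (resConfig A B φ) (resMult A B c φ) lam ξ u v a b
      = wdvvDefect A c lam (φ ξ) (φ u) (φ v) (φ a) (φ b) := by
  simp only [wdvvDefect, Gform_resConfig hB, hmul]

end Restriction

theorem restriction_satisfies_WDVV_general {N n : ℕ} {ι : Type*}
    (A : Finset (Fin N → ℂ)) (c : (Fin N → ℂ) → ℂ) (lam : ℂ)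
    (hA0 : ∀ α ∈ A, α ≠ 0) (hlam : lam ≠ 0) (hwdvv : SatisfiesWDVV A c lam)
    (S : ι → Fin N → ℂ) (hSA : ∀ i, S i ∈ A)
    (hweight : ∀ i y, S i ⬝ᵥ y = 1 → collinWeight A c (S i) y ≠ 0)
    (B : Finset (Fin N → ℂ))
    (hB : ∀ α, α ∈ B ↔ α ∈ A ∧ α ∈ Submodule.span ℂ (Set.range S))
    (φ : (Fin n → ℂ) →ₗ[ℂ] (Fin N → ℂ)) (hφinj : Function.Injective φ)
    (hφrange : Set.range φ = {x | ∀ β ∈ B, ev β x = 0})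
    (hGnd : ∀ u, (∀ β ∈ B, ev β u = 0) →
      (∀ v, (∀ β ∈ B, ev β v = 0) → Gform A c u v = 0) → u = 0) :
    SatisfiesWDVV (resConfig A B φ) (resMult A B c φ) lam := by
  obtain ⟨hA, hdefect⟩ := satisfiesWDVV_iff.1 hwdvv
  have hBφ (β) (hβ : β ∈ B) (w) : β ⬝ᵥ φ w = 0 := hφrange.subset (Set.mem_range_self w) β hβ
  have hSφ (i w) : S i ⬝ᵥ φ w = 0 :=
    hBφ _ ((hB _).2 ⟨hSA i, Submodule.subset_span (Set.mem_range_self i)⟩) w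
  have hBres (β) (hβ : β ∈ B) : resCov φ β = 0 := funext fun _ ↦ hBφ β hβ _
  have hA' : Nondeg (resConfig A B φ) (resMult A B c φ) := by
    refine fun u hu ↦ hφinj ((hGnd _ (fun β hβ ↦ hBφ β hβ u) fun v hv ↦ ?_).trans φ.map_zero.symm)
    obtain ⟨w, rfl⟩ := hφrange.superset hv
    rw [← Gform_resConfig hBres, hu]
  refine satisfiesWDVV_iff.2 ⟨hA', fun ξ hξ u v a b ↦ ?_⟩
  have hξA (α) (hα : α ∈ A) := sin_ne_zero_or_forall_dotProduct_map_eq_zero hBres hξ hα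
  have hclosed (u a) : cotMul A c (φ ξ) (φ u) (φ a) ∈ Set.range φ :=
    hφrange.superset fun β hβ ↦ dotProduct_cotMul_eq_zero_of_mem_span hA0 hA hlam hdefect
      (fun i ↦ hA0 _ (hSA i)) hweight (hSφ · ξ) (hSφ · u) (hSφ · a)
      (fun α hα ↦ (hξA α hα).imp_right fun h ↦ .inl (h u)) ((hB β).1 hβ).2
  rw [wdvvDefect_resConfig hBres fun u a ↦ map_cotMul_resConfig hBres hA hA' (hclosed u a)]
  exact wdvvDefect_eq_zero_of_forall_mem_regularPoints hA0 (fun z hz ↦ hdefect z hz _ _ _ _)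
    fun α hα ↦ (hξA α hα).imp_right fun h ↦ ⟨h u, h v⟩

/-- restriction of a trigonometric solution of the WDVV equations to the
subspace `W_B` again satisfies the trigonometric WDVV equations. -/
theorem restriction_satisfies_WDVV {N n : ℕ}
    (A : Finset (Fin N → ℂ)) (c : (Fin N → ℂ) → ℂ) (lam : ℂ)
    (hA0 : ∀ α ∈ A, α ≠ (0 : Fin N → ℂ))
    (hlat : InLattice A)
    (hlam : lam ≠ 0)
    (hwdvv : SatisfiesWDVV A c lam)
    (W : Submodule ℂ (Fin N → ℂ)) (B : Finset (Fin N → ℂ))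
    (hB : ∀ α : Fin N → ℂ, α ∈ B ↔ α ∈ A ∧ α ∈ W)
    (hWspan : W = Submodule.span ℂ (B : Set (Fin N → ℂ)))
    (k : ℕ) (S : Fin k → (Fin N → ℂ))
    (hSB : ∀ i, S i ∈ B)
    (hSind : LinearIndependent ℂ S)
    (hSspan : Submodule.span ℂ (Set.range S) = W)
    (hC : ∀ i : Fin k, ∀ α₀ ∈ A, Collin (S i) α₀ →
      ∀ kk : (Fin N → ℂ) → ℂ, (∀ γ ∈ A, Collin (S i) γ → γ = kk γ • α₀) →
        ∑ γ ∈ A.filter (fun γ => Collin (S i) γ), c γ * kk γ ^ 2 ≠ 0)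
    (φ : (Fin n → ℂ) →ₗ[ℂ] (Fin N → ℂ))
    (hφinj : Function.Injective φ)
    (hφrange : Set.range φ = {x : Fin N → ℂ | ∀ β ∈ B, ev β x = 0})
    (hGnd : ∀ u : Fin N → ℂ, (∀ β ∈ B, ev β u = 0) →
      (∀ v : Fin N → ℂ, (∀ β ∈ B, ev β v = 0) → Gform A c u v = 0) → u = 0) :
    SatisfiesWDVV (resConfig A B φ) (resMult A B c φ) lam  := by
  subst hSspan
  exact restriction_satisfies_WDVV_general A c lam hA0 hlam hwdvv S (fun i ↦ ((hB _).1 (hSB i)).1)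
    (fun i y hy ↦ hC i (S i) ((hB _).1 (hSB i)).1 ⟨1, (one_smul ℂ _).symm⟩ (· ⬝ᵥ y) <| by
      rintro _ _ ⟨t, rfl⟩
      simp [hy]) B hB φ hφinj hφrange hGnd

end
end
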